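/- Let S_min be the smallest score and β = min over pairs (j,j') with S_j > S_{j'} of S_j/S_{j'} (so β > 1). Let c = ((β+1)/2)^{1/(K-1)} and γ = min{δ, 0.5-δ, (1-δ)(c-1)/(c+1)}. If α > 2^{K-1}(log(K-1) - log γ) / (S_min · min{1, (β-1)/2}), then for all r, j ∈ {1,...,K}, |I_j^r - I_j^{r,α}| ≤ ε_α where ε_α = (K-1) exp(-α S_min min{1, (β-1)/2} / 2^{K-1}). -/

import Mathlib

noncomputable def prodMask {N : ℕ} (S : Fin N → ℝ) (α δ : ℝ) : ℕ → Fin N → ℝ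
  | 0 => fun _ => 1
  | r + 1 => fun j =>
      prodMask S α δ r j *
        (1 - (Real.exp (α * S j * prodMask S α δ r j) /
              ∑ j', Real.exp (α * S j' * prodMask S α δ r j')) - δ)

/-- Smooth rank indicator `I_j^{r+1,α}` (the argument `r : ℕ` is the 0-indexed rank,
so `smoothI S α δ 0 j` is the top-1 indicator `I_j^{1,α}`). -/
noncomputable def smoothI {N : ℕ} (S : Fin N → ℝ) (α δ : ℝ) (r : ℕ) (j : Fin N) : ℝ :=
  Real.exp (α * S j * prodMask S α δ r j) /
    ∑ j', Real.exp (α * S j' * prodMask S α δ r j')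

/-- True rank indicator: `trueI S r j = 1` iff `S j` is the `(r+1)`-th largest score
(0-indexed rank `r`), i.e. exactly `r` scores are strictly larger than `S j`. -/
noncomputable def trueI {N : ℕ} (S : Fin N → ℝ) (r : ℕ) (j : Fin N) : ℝ :=
  if (Finset.univ.filter fun i => S j < S i).card = r then 1 else 0

/-!
Induct on the rank `r`. If all indicators of rank below `r` are within `ε` of the truth, then
`prodMask` is nonpositive at the items already ranked and lies in `[(1 - δ - ε) ^ r, (1 - δ) ^ r]`
at all others; since `ε ≤ (1 - δ) (c - 1) / (c + 1)` and `c ^ (K - 1) = (β + 1) / 2`, any two masks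
of the second kind have ratio at most `(β + 3) / 4`. The item `j₀` of rank `r` therefore dominates
the softmax. Write `e = exp (-L)` with `L = α Smin min {1, (β - 1) / 2} / 2 ^ (K - 1)`.
The scores decay geometrically along the ranks, so by Bernoulli an item `k` ranks below `j₀` has
relative weight at most `e ^ (3 k / 2)`, which makes the sum of these weights independent of `N`.
If there is such an item, then `S j₀ ≥ β Smin`, which lowers the relative weight of each of the `r`
masked items from `e` to `e ^ 3`. This leaves room for the geometric tail inside `(K - 1) e`.
-/

section DescRank

variable {ι R : Type*} [Fintype ι]

/-- The 0-indexed rank of `j` when the scores `S` are listed in decreasing order; tied items share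
the smallest rank of their class. -/
def descRank [LinearOrder R] (S : ι → R) (j : ι) : ℕ :=
  (Finset.univ.filter fun i => S j < S i).card

lemma descRank_lt_card [LinearOrder R] (S : ι → R) (j : ι) : descRank S j < Fintype.card ι :=
  Finset.card_lt_univ_of_notMem (x := j) (by simp)

lemma descRank_lt_descRank_iff [LinearOrder R] {S : ι → R} {i j : ι} :
    descRank S i < descRank S j ↔ S j < S i := by
  constructor
  · contrapose!
    intro h
    exact Finset.card_le_card (Finset.monotone_filter_right _ fun _ _ hk => h.trans_lt hk)
  · intro h
    refine Finset.card_lt_card <| (Finset.ssubset_iff_of_subset ?_).2 ⟨i, by simpa, by simp⟩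
    exact Finset.monotone_filter_right _ fun _ _ hk => h.trans hk

lemma descRank_injective [LinearOrder R] {S : ι → R} (hS : Function.Injective S) :
    Function.Injective (descRank S) := by
  intro i j hij
  refine hS (le_antisymm ?_ ?_) <;> rw [← not_lt, ← descRank_lt_descRank_iff] <;> lia

lemma exists_descRank_eq [LinearOrder R] {S : ι → R} (hS : Function.Injective S) {r : ℕ}
    (hr : r < Fintype.card ι) : ∃ j, descRank S j = r := by
  have hbij : Function.Bijective fun j => (⟨descRank S j, descRank_lt_card S j⟩ : Fin _) :=
    (Fintype.bijective_iff_injective_and_card _).2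
      ⟨fun _ _ h => descRank_injective hS (Fin.mk.inj h), by simp⟩
  obtain ⟨j, hj⟩ := hbij.surjective ⟨r, hr⟩
  exact ⟨j, Fin.mk.inj hj⟩

lemma mul_pow_le_of_descRank_eq_add [Semiring R] [LinearOrder R] [IsOrderedRing R] {S : ι → R}
    (hS : Function.Injective S) {β : R} (hβ : 0 ≤ β) (hratio : ∀ i j, S i < S j → S i * β ≤ S j)
    {i j : ι} {k : ℕ} (hk : descRank S j = descRank S i + k) : S j * β ^ k ≤ S i := by
  induction k generalizing j with
  | zero => simp [descRank_injective hS (a₁ := j) (a₂ := i) (by simpa using hk)]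
  | succ k ih =>
    obtain ⟨l, hl⟩ : ∃ l, descRank S l = descRank S i + k :=
      exists_descRank_eq hS (by have := descRank_lt_card S j; lia)
    calc S j * β ^ (k + 1) = S j * β * β ^ k := by rw [pow_succ', mul_assoc]
      _ ≤ S l * β ^ k := by
        gcongr
        exact hratio j l (descRank_lt_descRank_iff.1 (by lia))
      _ ≤ S i := ih hl

end DescRank

section Softmax

variable {ι : Type*} [Fintype ι]

/-- The softmax of the exponents `x`: the smooth rank indicators are its values at the masked and
scaled scores. -/
noncomputable def softmax (x : ι → ℝ) (j : ι) : ℝ :=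
  Real.exp (x j) / ∑ i, Real.exp (x i)

lemma softmax_nonneg (x : ι → ℝ) (j : ι) : 0 ≤ softmax x j := by
  unfold softmax
  positivity

lemma sum_softmax [Nonempty ι] (x : ι → ℝ) : ∑ j, softmax x j = 1 := by
  simp only [softmax, ← Finset.sum_div]
  exact div_self (by positivity)

lemma softmax_le_exp_sub (x : ι → ℝ) (i j : ι) : softmax x j ≤ Real.exp (x j - x i) := by
  rw [softmax, Real.exp_sub]
  gcongr
  exact Finset.single_le_sum (f := fun k => Real.exp (x k)) (fun _ _ => by positivity)
    (Finset.mem_univ i)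

lemma abs_ite_sub_softmax_le [DecidableEq ι] (x : ι → ℝ) (i j : ι) :
    |(if j = i then 1 else 0) - softmax x j| ≤
      ∑ k ∈ Finset.univ.erase i, Real.exp (x k - x i) := by
  by_cases hji : j = i
  · subst hji
    have : Nonempty ι := ⟨j⟩
    have htail : 1 - softmax x j = ∑ k ∈ Finset.univ.erase j, softmax x k := by
      rw [← sum_softmax x, ← Finset.add_sum_erase _ _ (Finset.mem_univ j), add_sub_cancel_left]
    rw [if_pos rfl, htail, abs_of_nonneg (Finset.sum_nonneg fun k _ => softmax_nonneg x k)]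
    exact Finset.sum_le_sum fun k _ => softmax_le_exp_sub x j k
  · rw [if_neg hji, zero_sub, abs_neg, abs_of_nonneg (softmax_nonneg x j)]
    exact (softmax_le_exp_sub x i j).trans <|
      Finset.single_le_sum (f := fun k => Real.exp (x k - x i)) (fun _ _ => by positivity)
        (by simpa)

end Softmax

section RealInequalities

lemma sum_pow_le_of_injOn {ι : Type*} {s : Finset ι} {f : ι → ℕ} (hf : Set.InjOn f s) {q : ℝ}
    (hq₀ : 0 ≤ q) (hq₁ : q < 1) {m : ℕ} (hm : ∀ i ∈ s, m ≤ f i) :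
    ∑ i ∈ s, q ^ f i ≤ q ^ m / (1 - q) := by
  have hinj : Set.InjOn (fun i => f i - m) s := fun i hi j hj hij =>
    hf hi hj (by have := hm i hi; have := hm j hj; grind)
  calc ∑ i ∈ s, q ^ f i = q ^ m * ∑ i ∈ s, q ^ (f i - m) := by
        rw [Finset.mul_sum]
        exact Finset.sum_congr rfl fun i hi => by rw [← pow_add, Nat.add_sub_cancel' (hm i hi)]
    _ = q ^ m * ∑ k ∈ s.image (fun i => f i - m), q ^ k := by rw [Finset.sum_image hinj]
    _ ≤ q ^ m * ∑' k, q ^ k := by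
        gcongr
        exact (summable_geometric_of_lt_one hq₀ hq₁).sum_le_tsum _ fun k _ => by positivity
    _ = q ^ m / (1 - q) := by rw [tsum_geometric_of_lt_one hq₀ hq₁, div_eq_mul_inv]

lemma half_add_one_pow_le {c : ℝ} (hc : 0 ≤ c) (n : ℕ) : ((c + 1) / 2) ^ n ≤ (c ^ n + 1) / 2 := by
  have hconv := (convexOn_pow n).2 (Set.mem_Ici.2 hc) (Set.mem_Ici.2 zero_le_one)
    one_half_pos.le one_half_pos.le (add_halves 1)
  calc ((c + 1) / 2) ^ n = (1 / 2 * c + 1 / 2 * 1) ^ n := by ring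
    _ ≤ 1 / 2 * c ^ n + 1 / 2 * 1 := by simpa using hconv
    _ = (c ^ n + 1) / 2 := by ring

lemma pow_le_half_add_one_mul_sub_pow {a c ε : ℝ} (ha : 0 ≤ a) (hc : 1 ≤ c)
    (hε : ε ≤ a * (c - 1) / (c + 1)) {r n : ℕ} (hrn : r ≤ n) :
    a ^ r ≤ (c ^ n + 1) / 2 * (a - ε) ^ r := by
  have hε' : a ≤ (c + 1) / 2 * (a - ε) := by
    rw [le_div_iff₀ (by linarith)] at hε
    linarith
  have ha_sub : 0 ≤ a - ε := nonneg_of_mul_nonneg_right (ha.trans hε') (by linarith)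
  calc a ^ r ≤ ((c + 1) / 2) ^ r * (a - ε) ^ r := by
        rw [← mul_pow]
        gcongr
    _ ≤ ((c + 1) / 2) ^ n * (a - ε) ^ r := by
        gcongr
        linarith
    _ ≤ (c ^ n + 1) / 2 * (a - ε) ^ r := by
        gcongr
        exact half_add_one_pow_le (by linarith) n

lemma mul_exp_neg_lt_of_log_sub_log_lt {a b L : ℝ} (ha : 0 < a) (hb : 0 < b)
    (h : Real.log a - Real.log b < L) : a * Real.exp (-L) < b := by
  calc a * Real.exp (-L) = Real.exp (Real.log a - L) := by
        rw [sub_eq_add_neg, Real.exp_add, Real.exp_log ha]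
    _ < Real.exp (Real.log b) := Real.exp_lt_exp.2 (by linarith)
    _ = b := Real.exp_log hb

lemma mul_pow_six_add_div_one_sub_le {a w : ℝ} (ha : 1 ≤ a) (hw₀ : 0 ≤ w) (hw : w ≤ 1 / 2) :
    a * w ^ 6 + w ^ 3 / (1 - w ^ 3) ≤ a * w ^ 2 := by
  have hw₃ : w ^ 3 ≤ 1 / 8 := (pow_le_pow_left₀ hw₀ hw 3).trans (by norm_num)
  have hhead : a * w ^ 6 ≤ 1 / 16 * (a * w ^ 2) :=
    calc a * w ^ 6 = w ^ 4 * (a * w ^ 2) := by ring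
      _ ≤ (1 / 2) ^ 4 * (a * w ^ 2) := by gcongr
      _ = 1 / 16 * (a * w ^ 2) := by norm_num
  have htail : w ^ 3 / (1 - w ^ 3) ≤ 4 / 7 * (a * w ^ 2) :=
    calc w ^ 3 / (1 - w ^ 3) ≤ w ^ 3 / (7 / 8) := by
          gcongr
          linarith
      _ = 8 / 7 * (1 * w ^ 2 * w) := by ring
      _ ≤ 8 / 7 * (a * w ^ 2 * (1 / 2)) := by gcongr
      _ = 4 / 7 * (a * w ^ 2) := by ring
  linarith [show 0 ≤ a * w ^ 2 by positivity]

lemma mul_exp_neg_three_mul_add_le {a L : ℝ} (ha : 1 ≤ a) (hL : Real.exp (-L) ≤ 1 / 4) :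
    a * Real.exp (-(3 * L)) + Real.exp (-(3 / 2 * L)) / (1 - Real.exp (-(3 / 2 * L))) ≤
      a * Real.exp (-L) := by
  have hexp (k : ℕ) : Real.exp (-(k / 2 * L)) = Real.exp (-(L / 2)) ^ k := by
    rw [← Real.exp_nat_mul]
    ring_nf
  have h₂ := hexp 2
  have h₃ := hexp 3
  have h₆ := hexp 6
  norm_num at h₂ h₃ h₆
  have hhalf : Real.exp (-(L / 2)) ≤ 1 / 2 :=
    le_of_sq_le_sq (by linarith) (by norm_num)
  rw [h₂, h₃, h₆]
  exact mul_pow_six_add_div_one_sub_le ha (Real.exp_pos _).le hhalf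

lemma pos_of_mul_log_sub_log_div_lt {a b d p α : ℝ} (ha : 1 ≤ a) (hb₀ : 0 ≤ b) (hb₁ : b ≤ 1)
    (hd : 0 ≤ d) (hp : 0 ≤ p) (h : p * (Real.log a - Real.log b) / d < α) : 0 < α := by
  have hlog : 0 ≤ Real.log a - Real.log b := by
    linarith [Real.log_nonneg ha, Real.log_nonpos hb₀ hb₁]
  exact lt_of_le_of_lt (by positivity) h

lemma mul_exp_neg_lt_of_mul_log_sub_log_div_lt {a b d p α : ℝ} (ha : 0 < a) (hb : 0 < b)
    (hd : 0 < d) (hp : 0 < p) (h : p * (Real.log a - Real.log b) / d < α) :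
    a * Real.exp (-(α * d / p)) < b := by
  refine mul_exp_neg_lt_of_log_sub_log_lt ha hb ?_
  rwa [lt_div_iff₀' hp, ← div_lt_iff₀ hd]

lemma min_tolerance_pos {δ c : ℝ} (hδ : δ ∈ Set.Ioo 0 0.5) (hc : 1 < c) :
    0 < min δ (min (0.5 - δ) ((1 - δ) * (c - 1) / (c + 1))) := by
  obtain ⟨hδ₀, hδ₁⟩ := hδ
  refine lt_min hδ₀ (lt_min (sub_pos.2 hδ₁) ?_)
  apply div_pos (mul_pos _ _) <;> norm_num at hδ₁ ⊢ <;> linarith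

end RealInequalities

section RankedSums

variable {ι : Type*} [Fintype ι] {ρ : ι → ℕ} {x : ι → ℝ} {j₀ : ι}

lemma sum_exp_sub_le_of_nonpos (hρ : Function.Injective ρ)
    (hx : ∀ j, ρ j < ρ j₀ → x j ≤ 0) :
    ∑ j with ρ j < ρ j₀, Real.exp (x j - x j₀) ≤ ρ j₀ * Real.exp (-x j₀) := by
  have hcard : Finset.card {j | ρ j < ρ j₀} ≤ ρ j₀ := by
    simpa using Finset.card_le_card_of_injOn (t := Finset.range (ρ j₀)) ρ
      (fun j hj => by simpa using hj) hρ.injOn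
  calc ∑ j with ρ j < ρ j₀, Real.exp (x j - x j₀)
      ≤ ∑ j with ρ j < ρ j₀, Real.exp (-x j₀) := by
        gcongr with j hj
        linarith [hx j (Finset.mem_filter.1 hj).2]
    _ = Finset.card {j | ρ j < ρ j₀} * Real.exp (-x j₀) := by
        rw [Finset.sum_const, nsmul_eq_mul]
    _ ≤ ρ j₀ * Real.exp (-x j₀) := by gcongr

lemma sum_exp_sub_le_of_gap (hρ : Function.Injective ρ) {g : ℝ} (hg : 0 < g)
    (hx : ∀ j, ρ j₀ < ρ j → x j + (ρ j - ρ j₀ : ℕ) * g ≤ x j₀) :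
    ∑ j with ρ j₀ < ρ j, Real.exp (x j - x j₀) ≤ Real.exp (-g) / (1 - Real.exp (-g)) := by
  have hinj : Set.InjOn (fun j => ρ j - ρ j₀)
      (Finset.univ.filter fun j => ρ j₀ < ρ j : Finset ι) := by
    intro i hi j hj hij
    simp only [Finset.coe_filter, Finset.mem_univ, true_and, Set.mem_ofPred_eq] at hi hj
    exact hρ (by grind)
  calc ∑ j with ρ j₀ < ρ j, Real.exp (x j - x j₀)
      ≤ ∑ j with ρ j₀ < ρ j, Real.exp (-g) ^ (ρ j - ρ j₀) := by
        gcongr with j hj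
        rw [← Real.exp_nat_mul]
        gcongr
        linarith [hx j (Finset.mem_filter.1 hj).2]
    _ ≤ Real.exp (-g) ^ 1 / (1 - Real.exp (-g)) :=
        sum_pow_le_of_injOn hinj (Real.exp_pos _).le (Real.exp_lt_one_iff.2 (neg_neg_of_pos hg))
          fun j hj => Nat.sub_pos_of_lt (Finset.mem_filter.1 hj).2
    _ = Real.exp (-g) / (1 - Real.exp (-g)) := by rw [pow_one]

lemma sum_erase_eq_sum_lt_add_sum_gt {M : Type*} [AddCommMonoid M] [DecidableEq ι]
    (hρ : Function.Injective ρ) (j₀ : ι) (f : ι → M) :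
    ∑ j ∈ Finset.univ.erase j₀, f j = ∑ j with ρ j < ρ j₀, f j + ∑ j with ρ j₀ < ρ j, f j := by
  rw [← Finset.sum_union (Finset.disjoint_filter.2 fun _ _ => lt_asymm)]
  congr 1
  ext j
  simp [hρ.ne_iff]

end RankedSums

section RatioSeparated

variable {ι : Type*} {S P : ι → ℝ} {s β α m t : ℝ} {j₀ : ι}

/-- Pairwise distinct scores, all at least `s > 0`, such that a larger score exceeds a smaller one
by a factor of at least `β > 1`. -/
structure RatioSeparated (S : ι → ℝ) (s β : ℝ) : Prop where
  injective : Function.Injective S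
  pos : 0 < s
  le : ∀ i, s ≤ S i
  one_lt : 1 < β
  mul_le : ∀ i j, S i < S j → S i * β ≤ S j

lemma RatioSeparated.of_isLeast (hpos : ∀ i, 0 < S i) (hinj : Function.Injective S)
    (hs : IsLeast (Set.range S) s)
    (hβ : IsLeast {x : ℝ | ∃ j j', S j' < S j ∧ x = S j / S j'} β) : RatioSeparated S s β where
  injective := hinj
  pos := by
    obtain ⟨i, rfl⟩ := hs.1
    exact hpos i
  le i := hs.2 ⟨i, rfl⟩
  one_lt := by
    obtain ⟨i, j, hij, rfl⟩ := hβ.1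
    exact (one_lt_div (hpos j)).2 hij
  mul_le i j hij := (le_div_iff₀' (hpos i)).1 (hβ.2 ⟨j, i, hij, rfl⟩)

namespace RatioSeparated

lemma mul_le_mul_mask (hS : RatioSeparated S s β) (hα : 0 ≤ α) (ht : 0 ≤ t) (hP : t ≤ P j₀)
    (hm : m ≤ 1) : α * s * m * t ≤ α * S j₀ * P j₀ := by
  have hs := hS.pos
  calc α * s * m * t ≤ α * s * 1 * t := by gcongr
    _ = α * s * t := by rw [mul_one]
    _ ≤ α * S j₀ * P j₀ := by
      gcongr
      · exact mul_nonneg hα (hs.le.trans (hS.le _))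
      · exact hS.le _

lemma three_mul_le_mul_mask (hS : RatioSeparated S s β) (hα : 0 ≤ α) (ht : 0 ≤ t) (hP : t ≤ P j₀)
    (hm : m ≤ 1) (hmβ : m ≤ (β - 1) / 2) {j : ι} (hj : S j < S j₀) :
    3 * (α * s * m * t) ≤ α * S j₀ * P j₀ := by
  have hs := hS.pos
  have hS₀ : s * (3 * m) ≤ S j₀ :=
    calc s * (3 * m) ≤ s * β := by
          gcongr
          linarith
      _ ≤ S j * β := by
          gcongr
          · linarith [hS.one_lt]
          · exact hS.le j
      _ ≤ S j₀ := hS.mul_le j j₀ hj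
  calc 3 * (α * s * m * t) = α * (s * (3 * m)) * t := by ring
    _ ≤ α * S j₀ * P j₀ := by
      gcongr
      exact mul_nonneg hα (hs.le.trans (hS.le _))

variable [Fintype ι]

lemma mul_mask_add_le (hS : RatioSeparated S s β) (hα : 0 ≤ α) (ht : 0 ≤ t) (hP : t ≤ P j₀)
    (hm : 0 ≤ m) (hmβ : m ≤ (β - 1) / 2) {j : ι} (hPj : P j ≤ (β + 3) / 4 * P j₀)
    (hj : descRank S j₀ < descRank S j) :
    α * S j * P j + (descRank S j - descRank S j₀ : ℕ) * (3 / 2 * (α * s * m * t)) ≤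
      α * S j₀ * P j₀ := by
  obtain ⟨k, hk⟩ := Nat.exists_eq_add_of_lt hj
  rw [add_assoc] at hk
  rw [hk, Nat.add_sub_cancel_left]
  have hs := hS.pos
  have hβ := hS.one_lt
  have hSj : 0 < S j := hs.trans_le (hS.le j)
  have hP₀ : 0 ≤ P j₀ := ht.trans hP
  have hbernoulli : 1 + (k + 1 : ℕ) * (β - 1) ≤ β ^ (k + 1) := by
    simpa using one_add_mul_le_pow (a := β - 1) (by linarith) (k + 1)
  have hgap : (k + 1 : ℕ) * (3 / 2 * m) ≤ β ^ (k + 1) - (β + 3) / 4 :=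
    calc (k + 1 : ℕ) * (3 / 2 * m) ≤ (k + 1 : ℕ) * (3 / 2 * ((β - 1) / 2)) := by gcongr
      _ ≤ β ^ (k + 1) - (β + 3) / 4 := by
        push_cast at hbernoulli ⊢
        nlinarith [mul_nonneg k.cast_nonneg (sub_nonneg.2 hβ.le)]
  have hdecay : S j * β ^ (k + 1) ≤ S j₀ :=
    mul_pow_le_of_descRank_eq_add hS.injective (by linarith) hS.mul_le hk
  calc α * S j * P j + (k + 1 : ℕ) * (3 / 2 * (α * s * m * t))
      = α * S j * P j + α * (s * ((k + 1 : ℕ) * (3 / 2 * m)) * t) := by ring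
    _ ≤ α * S j * ((β + 3) / 4 * P j₀) + α * (S j * (β ^ (k + 1) - (β + 3) / 4) * P j₀) := by
      gcongr
      · exact mul_nonneg hSj.le (le_trans (by positivity) hgap)
      · exact hS.le j
    _ = α * (S j * β ^ (k + 1)) * P j₀ := by ring
    _ ≤ α * S j₀ * P j₀ := by gcongr

lemma sum_erase_exp_sub_le [DecidableEq ι] (hS : RatioSeparated S s β) (hα : 0 < α) (ht : 0 < t)
    (hP : t ≤ P j₀) (hm₀ : 0 < m) (hm₁ : m ≤ 1) (hmβ : m ≤ (β - 1) / 2)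
    (hmasked : ∀ j, descRank S j < descRank S j₀ → P j ≤ 0)
    (hunmasked : ∀ j, descRank S j₀ < descRank S j → P j ≤ (β + 3) / 4 * P j₀)
    (hL : Real.exp (-(α * s * m * t)) ≤ 1 / 4) {n : ℕ} (hn : 1 ≤ n) (hj₀ : descRank S j₀ ≤ n) :
    ∑ j ∈ Finset.univ.erase j₀, Real.exp (α * S j * P j - α * S j₀ * P j₀) ≤
      n * Real.exp (-(α * s * m * t)) := by
  have hs := hS.pos
  have hmasked_sum {A : ℝ} (hA : A ≤ α * S j₀ * P j₀) :
      ∑ j with descRank S j < descRank S j₀, Real.exp (α * S j * P j - α * S j₀ * P j₀) ≤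
        n * Real.exp (-A) := by
    refine (sum_exp_sub_le_of_nonpos (descRank_injective hS.injective) fun j hj => ?_).trans
      (by gcongr)
    exact mul_nonpos_of_nonneg_of_nonpos (mul_nonneg hα.le (hs.le.trans (hS.le j))) (hmasked j hj)
  rw [sum_erase_eq_sum_lt_add_sum_gt (descRank_injective hS.injective)]
  by_cases hlast : ∃ j, descRank S j₀ < descRank S j
  · obtain ⟨i, hi⟩ := hlast
    calc _ ≤ n * Real.exp (-(3 * (α * s * m * t))) + Real.exp (-(3 / 2 * (α * s * m * t))) /
            (1 - Real.exp (-(3 / 2 * (α * s * m * t)))) :=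
          add_le_add
            (hmasked_sum (hS.three_mul_le_mul_mask hα.le ht.le hP hm₁ hmβ
              (descRank_lt_descRank_iff.1 hi)))
            (sum_exp_sub_le_of_gap (descRank_injective hS.injective) (by positivity) fun j hj =>
              hS.mul_mask_add_le hα.le ht.le hP hm₀.le hmβ (hunmasked j hj) hj)
      _ ≤ n * Real.exp (-(α * s * m * t)) := mul_exp_neg_three_mul_add_le (mod_cast hn) hL
  · rw [Finset.filter_false_of_mem fun j _ hj => hlast ⟨j, hj⟩, Finset.sum_empty, add_zero]
    exact hmasked_sum (hS.mul_le_mul_mask hα.le ht.le hP hm₁)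

end RatioSeparated

end RatioSeparated

section SmoothIndicators

variable {N : ℕ} {S : Fin N → ℝ} {α δ ε : ℝ} {r : ℕ} {j : Fin N}

lemma trueI_eq_ite_descRank (S : Fin N → ℝ) (r : ℕ) (j : Fin N) :
    trueI S r j = if descRank S j = r then 1 else 0 := rfl

lemma trueI_descRank (hS : Function.Injective S) (j₀ j : Fin N) :
    trueI S (descRank S j₀) j = if j = j₀ then 1 else 0 := by
  simp only [trueI_eq_ite_descRank, (descRank_injective hS).eq_iff]

lemma smoothI_eq_softmax (S : Fin N → ℝ) (α δ : ℝ) (r : ℕ) :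
    smoothI S α δ r = softmax fun j => α * S j * prodMask S α δ r j := rfl

lemma prodMask_eq_prod (S : Fin N → ℝ) (α δ : ℝ) (r : ℕ) (j : Fin N) :
    prodMask S α δ r j = ∏ l ∈ Finset.range r, (1 - smoothI S α δ l j - δ) := by
  induction r with
  | zero => rfl
  | succ r ih =>
    rw [Finset.prod_range_succ, ← ih]
    rfl

lemma smoothI_nonneg (S : Fin N → ℝ) (α δ : ℝ) (r : ℕ) (j : Fin N) : 0 ≤ smoothI S α δ r j := by
  rw [smoothI_eq_softmax]
  exact softmax_nonneg _ j

lemma smoothI_le_of_descRank_ne (h : |trueI S r j - smoothI S α δ r j| ≤ ε)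
    (hr : descRank S j ≠ r) : smoothI S α δ r j ≤ ε := by
  rw [trueI_eq_ite_descRank, if_neg hr, abs_le] at h
  linarith

lemma one_sub_le_smoothI_descRank
    (h : |trueI S (descRank S j) j - smoothI S α δ (descRank S j) j| ≤ ε) :
    1 - ε ≤ smoothI S α δ (descRank S j) j := by
  rw [trueI_eq_ite_descRank, if_pos rfl, abs_le] at h
  linarith

lemma pow_le_prodMask (hε : 0 ≤ 1 - δ - ε) (h : ∀ l < r, |trueI S l j - smoothI S α δ l j| ≤ ε)
    (hr : r ≤ descRank S j) : (1 - δ - ε) ^ r ≤ prodMask S α δ r j := by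
  rw [prodMask_eq_prod]
  calc (1 - δ - ε) ^ r = ∏ l ∈ Finset.range r, (1 - δ - ε) := by simp
    _ ≤ ∏ l ∈ Finset.range r, (1 - smoothI S α δ l j - δ) := by
      refine Finset.prod_le_prod (fun _ _ => hε) fun l hl => ?_
      have hlr := Finset.mem_range.1 hl
      linarith [smoothI_le_of_descRank_ne (h l hlr) (hlr.trans_le hr).ne']

lemma prodMask_le_pow (hε : 0 ≤ 1 - δ - ε) (h : ∀ l < r, |trueI S l j - smoothI S α δ l j| ≤ ε)
    (hr : r ≤ descRank S j) : prodMask S α δ r j ≤ (1 - δ) ^ r := by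
  rw [prodMask_eq_prod]
  calc ∏ l ∈ Finset.range r, (1 - smoothI S α δ l j - δ) ≤ ∏ l ∈ Finset.range r, (1 - δ) := by
        refine Finset.prod_le_prod (fun l hl => ?_) fun l _ => ?_
        · have hlr := Finset.mem_range.1 hl
          linarith [smoothI_le_of_descRank_ne (h l hlr) (hlr.trans_le hr).ne']
        · linarith [smoothI_nonneg S α δ l j]
    _ = (1 - δ) ^ r := by simp

lemma prodMask_nonpos (hεδ : ε ≤ δ) (hε : 0 ≤ 1 - δ - ε)
    (h : ∀ l < r, |trueI S l j - smoothI S α δ l j| ≤ ε) (hr : descRank S j < r) :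
    prodMask S α δ r j ≤ 0 := by
  rw [prodMask_eq_prod, ← Finset.mul_prod_erase _ _ (Finset.mem_range.2 hr)]
  refine mul_nonpos_of_nonpos_of_nonneg ?_ (Finset.prod_nonneg fun l hl => ?_)
  · linarith [one_sub_le_smoothI_descRank (h _ hr)]
  · obtain ⟨hne, hlr⟩ := Finset.mem_erase.1 hl
    linarith [smoothI_le_of_descRank_ne (h l (Finset.mem_range.1 hlr)) hne.symm]

lemma prodMask_le_mul_prodMask {c : ℝ} (hc : 1 ≤ c) (hδ : δ ≤ 1) (hε : 0 ≤ 1 - δ - ε)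
    (hεc : ε ≤ (1 - δ) * (c - 1) / (c + 1)) {n : ℕ} (hrn : r ≤ n)
    (h : ∀ l < r, ∀ j, |trueI S l j - smoothI S α δ l j| ≤ ε) {j₀ : Fin N}
    (hj₀ : r ≤ descRank S j₀) (hj : r ≤ descRank S j) :
    prodMask S α δ r j ≤ (c ^ n + 1) / 2 * prodMask S α δ r j₀ :=
  calc prodMask S α δ r j ≤ (1 - δ) ^ r := prodMask_le_pow hε (fun l hl => h l hl j) hj
    _ ≤ (c ^ n + 1) / 2 * (1 - δ - ε) ^ r :=
      pow_le_half_add_one_mul_sub_pow (by linarith) hc hεc hrn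
    _ ≤ (c ^ n + 1) / 2 * prodMask S α δ r j₀ := by
      gcongr
      exact pow_le_prodMask hε (fun l hl => h l hl j₀) hj₀

lemma RatioSeparated.abs_trueI_sub_smoothI_le {s β m c : ℝ} (hS : RatioSeparated S s β)
    (hα : 0 < α) (hm₀ : 0 < m) (hm₁ : m ≤ 1) (hmβ : m ≤ (β - 1) / 2)
    {n : ℕ} (hn : 1 ≤ n) (hnN : n < N) (hc : 1 ≤ c) (hcβ : c ^ n = (β + 1) / 2)
    (hε : n * Real.exp (-(α * s * m / 2 ^ n)) = ε) (hεδ : ε ≤ δ) (hεδ' : ε ≤ 1 / 2 - δ)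
    (hεc : ε ≤ (1 - δ) * (c - 1) / (c + 1)) (hr : r ≤ n) (j : Fin N) :
    |trueI S r j - smoothI S α δ r j| ≤ ε := by
  have hnR : (1 : ℝ) ≤ n := mod_cast hn
  have hε₀ : 0 ≤ ε := hε ▸ by positivity
  have hexp : Real.exp (-(α * s * m / 2 ^ n)) ≤ 1 / 4 := by
    linarith [le_mul_of_one_le_left (Real.exp_nonneg (-(α * s * m / 2 ^ n))) hnR]
  induction r using Nat.strong_induction_on generalizing j with
  | _ r ih =>
    have herr : ∀ l < r, ∀ j, |trueI S l j - smoothI S α δ l j| ≤ ε :=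
      fun l hl j => ih l hl (hl.le.trans hr) j
    obtain ⟨j₀, rfl⟩ := exists_descRank_eq hS.injective (r := r) (by simpa using hr.trans_lt hnN)
    have hmask₀ : (2 ^ n)⁻¹ ≤ prodMask S α δ (descRank S j₀) j₀ :=
      calc ((2 : ℝ) ^ n)⁻¹ ≤ (2 ^ descRank S j₀)⁻¹ := by
            gcongr
            norm_num
        _ = (1 / 2) ^ descRank S j₀ := by rw [one_div, inv_pow]
        _ ≤ (1 - δ - ε) ^ descRank S j₀ := by
            gcongr
            linarith
        _ ≤ _ := pow_le_prodMask (by linarith) (fun l hl => herr l hl j₀) le_rfl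
    rw [trueI_descRank hS.injective, smoothI_eq_softmax]
    refine (abs_ite_sub_softmax_le _ j₀ j).trans ?_
    rw [← hε, div_eq_mul_inv]
    refine hS.sum_erase_exp_sub_le hα (by positivity) hmask₀ hm₀ hm₁ hmβ
      (fun j hj => prodMask_nonpos hεδ (by linarith) (fun l hl => herr l hl j) hj)
      (fun j hj => ?_) (by rwa [← div_eq_mul_inv]) hn hr
    convert prodMask_le_mul_prodMask hc (by linarith) (by linarith) hεc hr herr le_rfl hj.le
      using 2
    rw [hcβ]
    ring

end SmoothIndicators

theorem smoothI_approx_error_general {N K : ℕ} (S : Fin N → ℝ)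
    (hpos : ∀ i, 0 < S i) (hinj : Function.Injective S)
    (hK : 2 ≤ K) (hKN : K ≤ N)
    (δ : ℝ) (hδ : δ ∈ Set.Ioo (0 : ℝ) 0.5)
    (Smin : ℝ) (hSmin : IsLeast (Set.range S) Smin)
    (β : ℝ) (hβ : IsLeast {x : ℝ | ∃ j j' : Fin N, S j' < S j ∧ x = S j / S j'} β)
    (c γ : ℝ)
    (hc : c = ((β + 1) / 2) ^ ((1 : ℝ) / ((K : ℝ) - 1)))
    (hγ : γ = min δ (min (0.5 - δ) ((1 - δ) * (c - 1) / (c + 1))))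
    (α : ℝ)
    (hC1 : α > 2 ^ (K - 1) * (Real.log ((K : ℝ) - 1) - Real.log γ) /
        (Smin * min 1 ((β - 1) / 2))) :
    ∀ r < K, ∀ j : Fin N,
      |trueI S r j - smoothI S α δ r j| ≤
        ((K : ℝ) - 1) * Real.exp (-α * Smin * min 1 ((β - 1) / 2) / 2 ^ (K - 1)) := by
  obtain ⟨n, rfl⟩ := Nat.exists_eq_add_of_le' (one_le_two.trans hK)
  have hn : 1 ≤ n := Nat.le_of_succ_le_succ hK
  have hnR : (1 : ℝ) ≤ n := mod_cast hn
  have hS := RatioSeparated.of_isLeast hpos hinj hSmin hβ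
  have hSmin₀ := hS.pos
  have hβ₁ := hS.one_lt
  have hm₀ : 0 < min 1 ((β - 1) / 2) := lt_min one_pos (by linarith)
  simp only [Nat.cast_add_one, add_sub_cancel_right, Nat.add_sub_cancel, one_div] at hc hC1 ⊢
  have hc₁ : 1 < c := hc ▸ Real.one_lt_rpow (by linarith) (by positivity)
  have hcβ : c ^ n = (β + 1) / 2 := hc ▸ Real.rpow_inv_natCast_pow (by linarith) (by lia)
  have hγ₀ : 0 < γ := hγ ▸ min_tolerance_pos hδ hc₁
  obtain ⟨hγδ, hγδ', hγc⟩ : γ ≤ δ ∧ γ ≤ 1 / 2 - δ ∧ γ ≤ (1 - δ) * (c - 1) / (c + 1) := by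
    norm_num [hγ]
  have hα : 0 < α :=
    pos_of_mul_log_sub_log_div_lt hnR hγ₀.le (by linarith) (by positivity) (by positivity) hC1
  have hε : n * Real.exp (-(α * (Smin * min 1 ((β - 1) / 2)) / 2 ^ n)) < γ :=
    mul_exp_neg_lt_of_mul_log_sub_log_div_lt (by positivity) hγ₀ (by positivity) (by positivity) hC1
  rw [← mul_assoc] at hε
  simp only [neg_mul, neg_div]
  exact fun r hr j => hS.abs_trueI_sub_smoothI_le hα hm₀ (min_le_left _ _) (min_le_right _ _) hn hKN
    hc₁.le hcβ rfl (by linarith) (by linarith) (by linarith) (Nat.lt_succ_iff.1 hr) j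

/-- main approximation theorem.  With `Smin` the smallest score, `β` the
minimal ratio `S j / S j'` over pairs with `S j > S j'`, `c = ((β+1)/2)^(1/(K-1))`,
`γ = min {δ, 0.5 - δ, (1-δ)(c-1)/(c+1)}`, if (C1)
`α > 2^(K-1) (log(K-1) - log γ) / (Smin · min{1, (β-1)/2})` holds, then for all ranks
`r ∈ {1,…,K}` (0-indexed `r < K`) and all `j ∈ {1,…,K}`,
`|I_j^r - I_j^{r,α}| ≤ ε_α` with `ε_α = (K-1) exp(-α Smin min{1,(β-1)/2} / 2^(K-1))`. -/
theorem smoothI_approx_error {N K : ℕ} (S : Fin N → ℝ)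
    (hpos : ∀ i, 0 < S i) (hinj : Function.Injective S)
    (hK : 2 ≤ K) (hKN : K ≤ N)
    (δ : ℝ) (hδ : δ ∈ Set.Ioo (0 : ℝ) 0.5)
    (Smin : ℝ) (hSmin : IsLeast (Set.range S) Smin)
    (β : ℝ) (hβ : IsLeast {x : ℝ | ∃ j j' : Fin N, S j' < S j ∧ x = S j / S j'} β)
    (c γ : ℝ)
    (hc : c = ((β + 1) / 2) ^ ((1 : ℝ) / ((K : ℝ) - 1)))
    (hγ : γ = min δ (min (0.5 - δ) ((1 - δ) * (c - 1) / (c + 1))))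
    (α : ℝ)
    (hC1 : α > 2 ^ (K - 1) * (Real.log ((K : ℝ) - 1) - Real.log γ) /
        (Smin * min 1 ((β - 1) / 2))) :
    ∀ r < K, ∀ j : Fin N, (j : ℕ) < K →
      |trueI S r j - smoothI S α δ r j| ≤
        ((K : ℝ) - 1) * Real.exp (-α * Smin * min 1 ((β - 1) / 2) / 2 ^ (K - 1)) :=
  fun r hr j _ => smoothI_approx_error_general S hpos hinj hK hKN δ hδ Smin hSmin β hβ c γ hc hγ α
    hC1 r hr j
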